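/- Let E be a field and suppose that for some prime p the Brauer group p-primary component Br(E')_p is trivial for every algebraic extension E' of E. Then for any pair of finite separable extensions E₁ ⊆ E₂ of E, the exponent of the group E₁*/N(E₂/E₁) is not divisible by p. -/

import Mathlib

universe u

/-- The norm group `N(L/E)`: the image of the norm map `L* → E*`, as a subgroup of `Eˣ`. -/
noncomputable def normGroup (E L : Type*) [Field E] [Field L] [Algebra E L] : Subgroup Eˣ :=
  (Units.map (Algebra.norm E : L →* E)).range

/-- `Br(F)_p = 0`, expressed as: every finite-dimensional central division algebra over `F`
of `p`-power dimension is trivial. -/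
def BrauerPComponentTrivial (F : Type u) [Field F] (p : ℕ) : Prop :=
  ∀ (D : Type u) [DivisionRing D] [Algebra F D], Algebra.IsCentral F D →
    FiniteDimensional F D → (∃ k : ℕ, Module.finrank F D = p ^ k) →
      Module.finrank F D = 1

open Finset Module Polynomial
open scoped TensorProduct

/-!
Let `L/F` be cyclic of prime degree `p` with generator `σ`, and suppose that `a ∈ F*` is not a norm.
Up to passing to the opposite, the cyclic algebra `(L/F, σ, a)` is the commutant of a
`σ`-semilinear map `τ` of a `p`-dimensional `L`-vector space with `τ ^ p = a`. The kernel of an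
element of the commutant is `τ`-stable, and if its dimension is `r`, the determinant of `τ` on it
has norm `a ^ r`. As `a ^ p` is a norm and `a` is not, this forces `r = 0` or `r = p`, so the
algebra is a central division algebra of dimension `p ^ 2`, contradicting `Br(F)_p = 0`. Hence every
element of `F` is a norm from `L`, and by induction from every Galois extension of `p`-power degree.

For a separable extension, a Sylow subgroup of the Galois group of its normal closure reduces to
this case at the cost of a degree prime to `p`. For an arbitrary finite extension, the passage from
the separable closure costs a further factor, the inseparable degree.
-/

section SemilinearDet

variable {L V ι : Type*} [CommRing L] [AddCommGroup V] [Module L V] [Fintype ι] [DecidableEq ι]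
  {σ : L →+* L}

theorem basis_det_comp_semilinear (b : Basis ι L V) (τ : V →ₛₗ[σ] V) (v : ι → V) :
    b.det (τ ∘ v) = b.det (τ ∘ b) * σ (b.det v) := by
  have hmul : b.toMatrix (τ ∘ v) = b.toMatrix (τ ∘ b) * σ.mapMatrix (b.toMatrix v) := by
    ext i j
    have hsum : τ (v j) = ∑ k, σ (b.repr (v j) k) • τ (b k) := by
      simp only [← map_smulₛₗ, ← map_sum, b.sum_repr]
    simp [Matrix.mul_apply, Basis.toMatrix_apply, hsum, mul_comm]
  simp only [Basis.det_apply, hmul, Matrix.det_mul, RingHom.map_det]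

theorem basis_det_iterate_semilinear (b : Basis ι L V) (τ : V →ₛₗ[σ] V) (n : ℕ) :
    b.det (τ^[n] ∘ b) = ∏ i ∈ range n, σ^[i] (b.det (τ ∘ b)) := by
  induction n with
  | zero => exact b.det_self
  | succ n ih =>
    rw [Function.iterate_succ', Function.comp_assoc, basis_det_comp_semilinear, ih,
      prod_range_succ', map_prod, mul_comm]
    simp only [Function.iterate_succ_apply', Function.iterate_zero, id_eq]

theorem prod_iterate_basis_det_eq_pow_card (b : Basis ι L V) (τ : V →ₛₗ[σ] V) {n : ℕ} {a : L}
    (hτ : ∀ v, τ^[n] v = a • v) :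
    ∏ i ∈ range n, σ^[i] (b.det (τ ∘ b)) = a ^ Fintype.card ι := by
  have hcomp : τ^[n] ∘ b = fun i ↦ a • b i := funext fun i ↦ hτ (b i)
  rw [← basis_det_iterate_semilinear, hcomp, AlternatingMap.map_smul_univ, b.det_self,
    prod_const, card_univ, smul_eq_mul, mul_one]

end SemilinearDet

theorem exists_prod_iterate_eq_pow_finrank {L V : Type*} [Field L] [AddCommGroup V] [Module L V]
    {σ : L →+* L} (τ : V →ₛₗ[σ] V) {n : ℕ} {a : L} (hτ : ∀ v, τ^[n] v = a • v)
    (W : Submodule L V) [FiniteDimensional L W] (hW : ∀ w ∈ W, τ w ∈ W) :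
    ∃ d : L, ∏ i ∈ range n, σ^[i] d = a ^ finrank L W := by
  have hrestrict : ∀ w : W, (τ.restrict hW)^[n] w = a • w := fun w ↦
    Subtype.ext ((Set.MapsTo.coe_iterate_restrict hW w n).trans (hτ w))
  have hprod := prod_iterate_basis_det_eq_pow_card (finBasis L W) (τ.restrict hW) hrestrict
  exact ⟨_, hprod.trans (by rw [Fintype.card_fin])⟩

/-- The `F`-algebra of `L`-linear endomorphisms of `V` commuting with a `σ`-semilinear map `τ`, i.e.
the endomorphism algebra of `V` as a module over the skew polynomial ring `L[x; σ]`, where `x` acts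
as `τ`. -/
def semilinearCommutant {F L V : Type*} [CommRing F] [CommRing L] [Algebra F L] [AddCommGroup V]
    [Module L V] [Module F V] [IsScalarTower F L V] {σ : L →ₐ[F] L}
    (τ : V →ₛₗ[(σ : L →+* L)] V) : Subalgebra F (End L V) where
  carrier := {f | ∀ v, f (τ v) = τ (f v)}
  mul_mem' hf hg v := by rw [End.mul_apply, hg, hf, End.mul_apply]
  add_mem' hf hg v := by rw [LinearMap.add_apply, hf, hg, LinearMap.add_apply, map_add]
  algebraMap_mem' r v := by
    simp only [algebraMap_end_apply, ← algebraMap_smul L r, map_smulₛₗ, RingHom.coe_coe,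
      AlgHom.commutes]

namespace semilinearCommutant

section CommRing

variable {F L V : Type*} [CommRing F] [CommRing L] [Algebra F L] [AddCommGroup V]
  [Module L V] [Module F V] [IsScalarTower F L V] {σ : L →ₐ[F] L}
  {τ : V →ₛₗ[(σ : L →+* L)] V} {f g : End L V} {n : ℕ} {a : L}

theorem apply_iterate (hf : f ∈ semilinearCommutant τ) (i : ℕ) (v : V) :
    f (τ^[i] v) = τ^[i] (f v) :=
  Function.Commute.iterate_right hf i v

theorem isUnit_of_isUnit_coe {f : semilinearCommutant τ} (hf : IsUnit (f : End L V)) :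
    IsUnit f := by
  obtain ⟨g, hfg, hgf⟩ := isUnit_iff_exists.1 hf
  have hg : g ∈ semilinearCommutant τ := fun v ↦
    calc g (τ v) = g (τ (f.1 (g v))) := by rw [← End.mul_apply, hfg, End.one_apply]
      _ = g (f.1 (τ (g v))) := by rw [f.2]
      _ = τ (g v) := by rw [← End.mul_apply, hgf, End.one_apply]
  exact isUnit_iff_exists.2 ⟨⟨g, hg⟩, Subtype.ext hfg, Subtype.ext hgf⟩

variable [NeZero n] {b : Basis (Fin n) L V}

theorem ext_of_apply_zero (hb : ∀ i : Fin n, b i = τ^[i] (b 0))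
    (hf : f ∈ semilinearCommutant τ) (hg : g ∈ semilinearCommutant τ) (h : f (b 0) = g (b 0)) :
    f = g :=
  b.ext fun i ↦ by rw [hb, apply_iterate hf, apply_iterate hg, h]

theorem exists_apply_zero_eq (hb : ∀ i : Fin n, b i = τ^[i] (b 0)) (hτ : ∀ v, τ^[n] v = a • v)
    (w : V) : ∃ f ∈ semilinearCommutant τ, f (b 0) = w := by
  obtain ⟨f, hf⟩ : ∃ f : End L V, ∀ i : Fin n, f (b i) = τ^[i] w :=
    ⟨b.constr ℕ fun i ↦ τ^[i] w, b.constr_basis ℕ _⟩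
  have hf_lt {i : ℕ} (hi : i < n) : f (τ^[i] (b 0)) = τ^[i] w :=
    (congrArg f (hb ⟨i, hi⟩)).symm.trans (hf ⟨i, hi⟩)
  have hf_zero : f (b 0) = w := hf 0
  have hf_le {i : ℕ} (hi : i ≤ n) : f (τ^[i] (b 0)) = τ^[i] w := by
    rcases hi.lt_or_eq with hi | rfl
    · exact hf_lt hi
    · rw [hτ, hτ, map_smul, hf_zero]
  have hcomm : f.comp τ = τ.comp f := b.ext fun i ↦
    calc f (τ (b i)) = f (τ^[i + 1] (b 0)) := by rw [Function.iterate_succ_apply', ← hb]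
      _ = τ (τ^[i] w) := by rw [hf_le i.2, Function.iterate_succ_apply']
      _ = τ (f (b i)) := by rw [hf]
  exact ⟨f, fun v ↦ LinearMap.congr_fun hcomm v, hf_zero⟩

/-- Evaluation at the cyclic vector `b 0`, which identifies the commutant with `V`. -/
noncomputable def evalZeroEquiv (hb : ∀ i : Fin n, b i = τ^[i] (b 0))
    (hτ : ∀ v, τ^[n] v = a • v) : semilinearCommutant τ ≃ₗ[F] V :=
  LinearEquiv.ofBijective
    (((LinearMap.applyₗ (b 0)).restrictScalars F).comp (semilinearCommutant τ).val.toLinearMap)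
    ⟨fun f g h ↦ Subtype.ext (ext_of_apply_zero hb f.2 g.2 h), fun w ↦
      let ⟨f, hf, h⟩ := exists_apply_zero_eq hb hτ w
      ⟨⟨f, hf⟩, h⟩⟩

theorem apply_basis (hb : ∀ i : Fin n, b i = τ^[i] (b 0)) (hf : f ∈ semilinearCommutant τ) {l : L}
    (h : f (b 0) = l • b 0) (i : Fin n) : f (b i) = σ^[i] l • b i := by
  have hiter (i : ℕ) : τ^[i] (l • b 0) = σ^[i] l • τ^[i] (b 0) := by
    induction i with
    | zero => rfl
    | succ i ih => simp only [Function.iterate_succ_apply', ih, map_smulₛₗ, RingHom.coe_coe]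
  rw [hb, apply_iterate hf, h, hiter]

theorem exists_apply_zero_eq_smul [IsDomain L] (hb : ∀ i : Fin n, b i = τ^[i] (b 0))
    (hτ : ∀ v, τ^[n] v = a • v) (hσ : ∀ j, 0 < j → j < n → σ^[j] ≠ id)
    {z : End L V} (hz : ∀ f ∈ semilinearCommutant τ, f * z = z * f) :
    ∃ c : L, z (b 0) = c • b 0 := by
  -- An `f` in the commutant with `f (b 0) = l • b 0` is diagonal with entries `σ^[j] l`, so
  -- commuting with `f` annihilates the `j`-th coordinate as soon as `σ^[j] l ≠ l`.
  have hcoord (j : Fin n) (hj : j ≠ 0) : b.repr (z (b 0)) j = 0 := by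
    obtain ⟨l, hl⟩ := Function.ne_iff.1 (hσ j (Fin.pos_iff_ne_zero.2 hj) j.2)
    obtain ⟨f, hf, hfl⟩ := exists_apply_zero_eq hb hτ (l • b 0)
    have hdiag : b.repr (f (z (b 0))) j = b.repr (z (b 0)) j * σ^[j] l := by
      conv_lhs => rw [← b.sum_repr (z (b 0))]
      simp only [map_sum, map_smul, apply_basis hb hf hfl]
      simp [Finsupp.single_apply]
    have hcomm : f (z (b 0)) = l • z (b 0) := by
      rw [← map_smul, ← hfl, ← End.mul_apply, hz f hf, End.mul_apply]
    rw [hcomm, map_smul, Finsupp.smul_apply, smul_eq_mul, mul_comm] at hdiag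
    by_contra hne
    exact hl (mul_left_cancel₀ hne hdiag).symm
  refine ⟨b.repr (z (b 0)) 0, b.repr.injective (Finsupp.ext fun j ↦ ?_)⟩
  rcases eq_or_ne j 0 with rfl | hj
  · simp
  · simp [hcoord j hj, hj]

theorem isCentral [IsDomain L] (hb : ∀ i : Fin n, b i = τ^[i] (b 0))
    (hτ : ∀ v, τ^[n] v = a • v) (ha : a ≠ 0) (hσ : ∀ j, 0 < j → j < n → σ^[j] ≠ id)
    (hfix : ∀ c : L, σ c = c → c ∈ Set.range (algebraMap F L)) :
    Algebra.IsCentral F (semilinearCommutant τ) := by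
  refine ⟨fun ⟨z, hz⟩ hzc ↦ ?_⟩
  have hz_comm (f : End L V) (hf : f ∈ semilinearCommutant τ) : f * z = z * f :=
    congrArg Subtype.val (Subalgebra.mem_center_iff.1 hzc ⟨f, hf⟩)
  obtain ⟨c, hc⟩ := exists_apply_zero_eq_smul hb hτ hσ hz_comm
  have := b.isTorsionFree
  have hτ_ne : τ (b 0) ≠ 0 := fun h ↦ by
    have hiter : ∀ m ≠ 0, τ^[m] (b 0) = 0
      | m + 1, _ => by rw [Function.iterate_succ_apply, h, iterate_map_zero]
    exact smul_ne_zero ha (b.ne_zero 0) ((hτ (b 0)).symm.trans (hiter n (NeZero.ne n)))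
  have hσc : σ c = c := by
    obtain ⟨f, hf, hfτ⟩ := exists_apply_zero_eq hb hτ (τ (b 0))
    apply smul_left_injective L hτ_ne
    calc σ c • τ (b 0) = z (τ (b 0)) := by rw [hz, hc, map_smulₛₗ, RingHom.coe_coe]
      _ = f (z (b 0)) := by rw [← hfτ, ← End.mul_apply, ← hz_comm f hf, End.mul_apply]
      _ = c • τ (b 0) := by rw [hc, map_smul, hfτ]
  obtain ⟨r, rfl⟩ := hfix c hσc
  refine Algebra.mem_bot.2 ⟨r, Subtype.ext ?_⟩
  refine ext_of_apply_zero hb (algebraMap F (semilinearCommutant τ) r).2 hz ?_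
  rw [hc, algebraMap_smul]
  rfl

end CommRing

theorem isUnit_or_eq_zero {F L V : Type*} [CommRing F] [Field L] [Algebra F L] [AddCommGroup V]
    [Module L V] [Module F V] [IsScalarTower F L V] [FiniteDimensional L V] {σ : L →ₐ[F] L}
    {τ : V →ₛₗ[(σ : L →+* L)] V} {n : ℕ} {a : L} (hτ : ∀ v, τ^[n] v = a • v)
    (ha : ∀ r, 0 < r → r < finrank L V → ∀ d : L, ∏ i ∈ range n, σ^[i] d ≠ a ^ r)
    (f : semilinearCommutant τ) : IsUnit f ∨ f = 0 := by
  refine or_iff_not_imp_right.2 fun hf ↦ isUnit_of_isUnit_coe ?_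
  have hlt : finrank L f.1.ker < finrank L V :=
    Submodule.finrank_lt fun h ↦ hf (Subtype.ext (LinearMap.ker_eq_top.1 h))
  obtain ⟨d, hd⟩ := exists_prod_iterate_eq_pow_finrank τ hτ f.1.ker fun v hv ↦ by
    rw [LinearMap.mem_ker] at hv ⊢
    rw [f.2, hv, map_zero]
  have hker : finrank L f.1.ker = 0 := by
    by_contra h
    exact ha _ (Nat.pos_of_ne_zero h) hlt d hd
  exact (LinearMap.isUnit_iff_ker_eq_bot f.1).2 (Submodule.finrank_eq_zero.1 hker)

end semilinearCommutant

section SemilinearTensor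

variable {F L B : Type*} [CommRing F] [CommRing L] [Algebra F L] [Ring B] [Algebra F B]
  {σ : L →ₐ[F] L} {x : B} {n : ℕ} {a : F}

/-- The `σ`-semilinear endomorphism `l ⊗ y ↦ σ l ⊗ x * y` of the base change `L ⊗[F] B`. -/
def semilinearTensor (σ : L →ₐ[F] L) (x : B) : L ⊗[F] B →ₛₗ[(σ : L →+* L)] L ⊗[F] B where
  toFun := TensorProduct.map σ.toLinearMap (LinearMap.mulLeft F x)
  map_add' := map_add _
  map_smul' l v := by
    induction v with
    | zero => simp
    | tmul l' y => simp [TensorProduct.smul_tmul']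
    | add v w hv hw => simp only [smul_add, map_add, hv, hw]

theorem semilinearTensor_iterate_tmul (i : ℕ) (l : L) (y : B) :
    (semilinearTensor σ x)^[i] (l ⊗ₜ y) = (σ^[i] l) ⊗ₜ (x ^ i * y) := by
  induction i generalizing l y with
  | zero => rw [pow_zero, one_mul]; rfl
  | succ i ih => rw [pow_succ, mul_assoc]; exact ih (σ l) (x * y)

theorem semilinearTensor_iterate_eq_smul (hσ : σ^[n] = id) (hx : x ^ n = algebraMap F B a)
    (v : L ⊗[F] B) : (semilinearTensor σ x)^[n] v = algebraMap F L a • v := by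
  induction v with
  | zero => rw [iterate_map_zero, smul_zero]
  | tmul l y =>
    rw [semilinearTensor_iterate_tmul, hσ, hx, ← Algebra.smul_def, TensorProduct.tmul_smul,
      algebraMap_smul, id]
  | add v w hv hw => rw [iterate_map_add, hv, hw, smul_add]

end SemilinearTensor

section CyclicAlgebra

variable {F L : Type*} [Field F] [Field L] [Algebra F L]

/-- The `σ`-semilinear endomorphism `σ ⊗ x` of `L ⊗ F[x] / (x ^ n - a)`: left multiplication by
the generator `x` in the cyclic algebra `(L/F, σ, a)` on the underlying `L`-vector space. -/
noncomputable def cyclicShift (σ : L →ₐ[F] L) (n : ℕ) (a : F) :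
    L ⊗[F] AdjoinRoot (X ^ n - C a) →ₛₗ[(σ : L →+* L)] L ⊗[F] AdjoinRoot (X ^ n - C a) :=
  semilinearTensor σ (AdjoinRoot.root (X ^ n - C a))

/-- The cyclic algebra of degree `n` attached to `σ` and `a`. Instead of generators `L` and `x`
with `x * l = σ l * x` and `x ^ n = a`, it is given as the commutant of left multiplication by `x`
and by `L`; this is the opposite of the algebra `(L/F, σ, a)` so presented. -/
noncomputable abbrev cyclicAlgebra (σ : L →ₐ[F] L) (n : ℕ) (a : F) :
    Subalgebra F (End L (L ⊗[F] AdjoinRoot (X ^ n - C a))) :=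
  semilinearCommutant (cyclicShift σ n a)

namespace cyclicAlgebra

/-- The `L`-basis `1 ⊗ 1, 1 ⊗ x, …, 1 ⊗ x ^ (n - 1)` of `L ⊗ F[x] / (x ^ n - a)`. -/
noncomputable def basis (L : Type*) [Field L] [Algebra F L] (n : ℕ) [NeZero n] (a : F) :
    Basis (Fin n) L (L ⊗[F] AdjoinRoot (X ^ n - C a)) :=
  ((AdjoinRoot.powerBasis' (monic_X_pow_sub_C a (NeZero.ne n))).basis.reindex
    (finCongr natDegree_X_pow_sub_C)).baseChange L

theorem basis_apply (n : ℕ) [NeZero n] (a : F) (i : Fin n) :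
    basis L n a i = 1 ⊗ₜ (AdjoinRoot.root (X ^ n - C a) ^ (i : ℕ)) := by
  simp only [basis, Basis.baseChange_apply, Basis.reindex_apply, PowerBasis.coe_basis,
    AdjoinRoot.powerBasis'_gen]
  rfl

theorem basis_eq_iterate (σ : L →ₐ[F] L) (n : ℕ) [NeZero n] (a : F) (i : Fin n) :
    basis L n a i = (cyclicShift σ n a)^[i] (basis L n a 0) := by
  rw [basis_apply, basis_apply, cyclicShift, semilinearTensor_iterate_tmul, iterate_map_one,
    Fin.val_zero, pow_zero, mul_one]

theorem iterate_eq_smul {σ : L →ₐ[F] L} {n : ℕ} (hσ : σ^[n] = id) (a : F)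
    (v : L ⊗[F] AdjoinRoot (X ^ n - C a)) :
    (cyclicShift σ n a)^[n] v = algebraMap F L a • v :=
  semilinearTensor_iterate_eq_smul hσ (root_X_pow_sub_C_pow n a) v

theorem finrank_eq {σ : L →ₐ[F] L} {n : ℕ} [NeZero n] (hσ : σ^[n] = id) (a : F) :
    finrank F (cyclicAlgebra σ n a) = finrank F L * n := by
  rw [(semilinearCommutant.evalZeroEquiv (basis_eq_iterate σ n a)
    (iterate_eq_smul hσ a)).finrank_eq, ← finrank_mul_finrank F L,
    finrank_eq_card_basis (basis L n a), Fintype.card_fin]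

end cyclicAlgebra

variable {σ : Gal(L/F)} {a : F}

theorem iterate_orderOf_eq_id (σ : Gal(L/F)) : σ^[orderOf σ] = id := by
  rw [← AlgEquiv.coe_pow, pow_orderOf_eq_one]; rfl

theorem iterate_ne_id_of_lt_orderOf {j : ℕ} (hj : j ≠ 0) (hjσ : j < orderOf σ) : σ^[j] ≠ id :=
  fun h ↦ pow_ne_one_of_lt_orderOf hj hjσ <| DFunLike.coe_injective <| by
    rw [AlgEquiv.coe_pow, h]; rfl

variable [FiniteDimensional F L] [IsGalois F L]

theorem algebraMap_norm_eq_prod_iterate (hσ : ∀ g, g ∈ Subgroup.zpowers σ) (x : L) :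
    algebraMap F L (Algebra.norm F x) = ∏ i ∈ range (orderOf σ), σ^[i] x := by
  classical
  rw [Algebra.norm_eq_prod_automorphisms, ← IsCyclic.image_range_orderOf hσ, prod_image]
  · simp only [AlgEquiv.coe_pow]
  · simpa only [coe_range] using pow_injOn_Iio_orderOf

theorem mem_range_algebraMap_of_fixed (hσ : ∀ g, g ∈ Subgroup.zpowers σ) {c : L} (hc : σ c = c) :
    c ∈ Set.range (algebraMap F L) := by
  refine (IsGalois.mem_range_algebraMap_iff_fixed c).2 fun g ↦ ?_
  obtain ⟨k, rfl⟩ := mem_powers_iff_mem_zpowers.2 (hσ g)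
  simpa only [AlgEquiv.coe_pow] using Function.iterate_fixed hc k

namespace cyclicAlgebra

theorem isCentral (hσ : ∀ g, g ∈ Subgroup.zpowers σ) (ha : a ≠ 0) :
    Algebra.IsCentral F (cyclicAlgebra (σ : L →ₐ[F] L) (orderOf σ) a) :=
  have : NeZero (orderOf σ) := ⟨(orderOf_pos σ).ne'⟩
  semilinearCommutant.isCentral (basis_eq_iterate _ _ a)
    (iterate_eq_smul (iterate_orderOf_eq_id σ) a) ((_root_.map_ne_zero _).2 ha)
    (fun _ hj ↦ iterate_ne_id_of_lt_orderOf hj.ne')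
    fun _ ↦ mem_range_algebraMap_of_fixed hσ

theorem isUnit_or_eq_zero (hσ : ∀ g, g ∈ Subgroup.zpowers σ)
    (ha : ∀ r, 0 < r → r < orderOf σ → ∀ d : L, Algebra.norm F d ≠ a ^ r)
    (f : cyclicAlgebra (σ : L →ₐ[F] L) (orderOf σ) a) : IsUnit f ∨ f = 0 := by
  have : NeZero (orderOf σ) := ⟨(orderOf_pos σ).ne'⟩
  have : FiniteDimensional L (L ⊗[F] AdjoinRoot (X ^ orderOf σ - C a)) :=
    (basis L (orderOf σ) a).finiteDimensional_of_finite
  refine semilinearCommutant.isUnit_or_eq_zero (iterate_eq_smul (iterate_orderOf_eq_id σ) a)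
    (fun r hr hrn d hd ↦ ?_) f
  rw [finrank_eq_card_basis (basis L (orderOf σ) a), Fintype.card_fin] at hrn
  refine ha r hr hrn d ((algebraMap F L).injective ?_)
  rw [algebraMap_norm_eq_prod_iterate hσ, map_pow]
  exact hd

end cyclicAlgebra

end CyclicAlgebra

section NormGroup

variable {F K L : Type*} [Field F] [Field K] [Field L] [Algebra F K] [Algebra F L]

theorem mem_normGroup_iff [FiniteDimensional F L] {a : Fˣ} :
    a ∈ normGroup F L ↔ ∃ x : L, Algebra.norm F x = a := by
  constructor
  · rintro ⟨x, rfl⟩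
    exact ⟨x, rfl⟩
  · rintro ⟨x, hx⟩
    have hx₀ : x ≠ 0 := Algebra.norm_ne_zero_iff.1 (hx ▸ a.ne_zero)
    exact ⟨Units.mk0 x hx₀, Units.ext hx⟩

theorem pow_finrank_mem_normGroup (L : Type*) [Field L] [Algebra F L] (a : Fˣ) :
    a ^ finrank F L ∈ normGroup F L :=
  ⟨Units.map (algebraMap F L : F →* L) a, Units.ext (Algebra.norm_algebraMap (a : F))⟩

section Tower

variable [Algebra K L] [IsScalarTower F K L]

theorem norm_mem_normGroup {u : Kˣ} (hu : u ∈ normGroup K L) :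
    Units.map (Algebra.norm F) u ∈ normGroup F L := by
  obtain ⟨v, rfl⟩ := hu
  exact ⟨v, Units.ext (Algebra.norm_norm (R := F) (S := K) (A := L)).symm⟩

theorem normGroup_le_of_normGroup_eq_top (h : normGroup K L = ⊤) :
    normGroup F K ≤ normGroup F L := by
  rintro _ ⟨u, rfl⟩
  exact norm_mem_normGroup (h ▸ Subgroup.mem_top u)

theorem pow_finrank_mem_normGroup_of_mem {a : Fˣ} (ha : a ∈ normGroup F K) :
    a ^ finrank K L ∈ normGroup F L := by
  obtain ⟨u, rfl⟩ := ha
  rw [← map_pow]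
  exact norm_mem_normGroup (pow_finrank_mem_normGroup L u)

variable (F K L) in
theorem normGroup_le_of_isScalarTower : normGroup F L ≤ normGroup F K := by
  rintro _ ⟨u, rfl⟩
  exact ⟨Units.map (Algebra.norm K) u, Units.ext (Algebra.norm_norm (R := F) (S := K) (A := L))⟩

end Tower

theorem normGroup_le_of_algHom (φ : K →ₐ[F] L) : normGroup F L ≤ normGroup F K :=
  let := φ.toAlgebra
  have := IsScalarTower.of_algHom φ
  normGroup_le_of_isScalarTower F K L

end NormGroup

theorem mem_of_pow_mem_of_coprime {G : Type*} [Group G] {H : Subgroup G} {x : G} {m n : ℕ}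
    (hmn : m.Coprime n) (hm : x ^ m ∈ H) (hn : x ^ n ∈ H) : x ∈ H := by
  have hbezout : x = (x ^ m) ^ m.gcdA n * (x ^ n) ^ m.gcdB n := by
    rw [← zpow_natCast, ← zpow_natCast, ← zpow_mul, ← zpow_mul, ← zpow_add, ← Nat.gcd_eq_gcd_ab,
      hmn.gcd_eq_one, Nat.cast_one, zpow_one]
  rw [hbezout]
  exact H.mul_mem (H.zpow_mem hm _) (H.zpow_mem hn _)

theorem BrauerPComponentTrivial.finrank_ne_pow {F A : Type u} [Field F] [Ring A] [Algebra F A]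
    [Algebra.IsCentral F A] {p k : ℕ} (hF : BrauerPComponentTrivial F p) (hp : p.Prime)
    (hk : k ≠ 0) (hA : ∀ x : A, IsUnit x ∨ x = 0) : finrank F A ≠ p ^ k := fun hdim ↦
  have hpos : 0 < finrank F A := hdim ▸ pow_pos hp.pos k
  have := nontrivial_of_finrank_pos hpos
  let := DivisionRing.ofIsUnitOrEqZero hA
  have hone := hF A ‹_› (.of_finrank_pos hpos) ⟨k, hdim⟩
  (Nat.one_lt_pow hk hp.one_lt).ne' (hdim.symm.trans hone)

theorem normGroup_eq_top_of_finrank_eq_prime {F L : Type u} [Field F] [Field L] [Algebra F L]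
    [FiniteDimensional F L] [IsGalois F L] {p : ℕ} (hp : p.Prime)
    (hF : BrauerPComponentTrivial F p) (hL : finrank F L = p) : normGroup F L = ⊤ := by
  have := Fact.mk hp
  have hcard : Nat.card Gal(L/F) = p := (IsGalois.card_aut_eq_finrank F L).trans hL
  have := isCyclic_of_prime_card hcard
  obtain ⟨σ, hσ⟩ := IsCyclic.exists_generator (α := Gal(L/F))
  have hσp : orderOf σ = p := (orderOf_eq_card_of_forall_mem_zpowers hσ).trans hcard
  refine (Subgroup.eq_top_iff' _).2 fun a ↦ by_contra fun ha ↦ ?_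
  have hnorm (r : ℕ) (hr : 0 < r) (hrσ : r < orderOf σ) (d : L) :
      Algebra.norm F d ≠ (a : F) ^ r := fun hd ↦
    ha <| mem_of_pow_mem_of_coprime (Nat.coprime_of_lt_prime hr.ne' (hσp ▸ hrσ) hp).symm
      (mem_normGroup_iff.2 ⟨d, hd⟩) (hL ▸ pow_finrank_mem_normGroup L a)
  have : NeZero (orderOf σ) := ⟨(orderOf_pos σ).ne'⟩
  have := cyclicAlgebra.isCentral hσ a.ne_zero
  refine hF.finrank_ne_pow (A := cyclicAlgebra (σ : L →ₐ[F] L) (orderOf σ) (a : F)) hp two_ne_zero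
    (cyclicAlgebra.isUnit_or_eq_zero hσ hnorm) ?_
  rw [cyclicAlgebra.finrank_eq (iterate_orderOf_eq_id σ), hL, hσp, sq]

section GaloisSubfields

variable (F M : Type*) [Field F] [Field M] [Algebra F M] [FiniteDimensional F M] [IsGalois F M]
  (p : ℕ) [Fact p.Prime]

theorem exists_intermediateField_not_dvd_finrank :
    ∃ K : IntermediateField F M, ¬ p ∣ finrank F K ∧ ∃ n, finrank K M = p ^ n := by
  obtain ⟨P⟩ : Nonempty (Sylow p Gal(M/F)) := inferInstance
  refine ⟨IntermediateField.fixedField P, ?_, ?_⟩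
  · rw [IntermediateField.finrank_eq_fixingSubgroup_index,
      IntermediateField.fixingSubgroup_fixedField]
    exact P.not_dvd_index
  · rw [IntermediateField.finrank_fixedField_eq_card]
    exact IsPGroup.iff_card.1 P.isPGroup'

variable {F M p}

theorem exists_intermediateField_isGalois_finrank_eq_prime {n : ℕ}
    (hM : finrank F M = p ^ (n + 1)) : ∃ K : IntermediateField F M,
      IsGalois F K ∧ finrank F K = p ∧ finrank K M = p ^ n := by
  have hp : p.Prime := Fact.out
  have hcard : Nat.card Gal(M/F) = p ^ (n + 1) := (IsGalois.card_aut_eq_finrank F M).trans hM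
  obtain ⟨H, hH⟩ := Sylow.exists_subgroup_card_pow_prime p
    (hcard ▸ pow_dvd_pow p n.le_succ : p ^ n ∣ Nat.card Gal(M/F))
  have hindex : H.index = p := by
    apply mul_left_cancel₀ (pow_ne_zero n hp.ne_zero)
    rw [← hH, H.card_mul_index, hcard, hH, pow_succ]
  have : H.Normal := Subgroup.normal_of_index_eq_minFac_card <| by
    rw [hindex, hcard, hp.pow_minFac n.succ_ne_zero]
  refine ⟨IntermediateField.fixedField H, .of_fixedField_normal_subgroup H, ?_, ?_⟩
  · rw [IntermediateField.finrank_eq_fixingSubgroup_index,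
      IntermediateField.fixingSubgroup_fixedField, hindex]
  · rw [IntermediateField.finrank_fixedField_eq_card, hH]

end GaloisSubfields

/-- Every finite separable extension `F'` of `F` satisfies `Br(F')_p = 0`. This property, unlike
`Br(F)_p = 0` alone, passes to finite separable extensions, as inductions on the degree require. -/
def HereditarilyBrauerPTrivial (F : Type u) [Field F] (p : ℕ) : Prop :=
  ∀ (F' : Type u) [Field F'] [Algebra F F'], FiniteDimensional F F' → Algebra.IsSeparable F F' →
    BrauerPComponentTrivial F' p

theorem HereditarilyBrauerPTrivial.extension {F : Type u} [Field F] {p : ℕ}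
    (hF : HereditarilyBrauerPTrivial F p) (K : Type u) [Field K] [Algebra F K]
    [FiniteDimensional F K] [Algebra.IsSeparable F K] : HereditarilyBrauerPTrivial K p := by
  intro E _ _ _ _
  algebraize [(algebraMap K E).comp (algebraMap F K)]
  exact hF E (.trans F K E) (.trans F K E)

theorem HereditarilyBrauerPTrivial.brauerPComponentTrivial {F : Type u} [Field F] {p : ℕ}
    (hF : HereditarilyBrauerPTrivial F p) : BrauerPComponentTrivial F p :=
  hF F inferInstance inferInstance

theorem normGroup_eq_top_of_finrank_eq_prime_pow {F M : Type u} [Field F] [Field M] [Algebra F M]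
    [FiniteDimensional F M] [IsGalois F M] {p : ℕ} (hp : p.Prime)
    (hF : HereditarilyBrauerPTrivial F p) {n : ℕ} (hM : finrank F M = p ^ n) :
    normGroup F M = ⊤ := by
  have := Fact.mk hp
  induction n generalizing F with
  | zero =>
    refine (Subgroup.eq_top_iff' _).2 fun a ↦ ?_
    simpa only [hM, pow_zero, pow_one] using pow_finrank_mem_normGroup M a
  | succ n ih =>
    obtain ⟨K, _, hFK, hKM⟩ := exists_intermediateField_isGalois_finrank_eq_prime hM
    have hK : normGroup F K = ⊤ :=
      normGroup_eq_top_of_finrank_eq_prime hp hF.brauerPComponentTrivial hFK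
    exact top_le_iff.1 (hK ▸ normGroup_le_of_normGroup_eq_top (ih (hF.extension K) hKM))

theorem exists_isGalois_algHom_of_isSeparable (F : Type u) (S : Type*) [Field F] [Field S]
    [Algebra F S] [FiniteDimensional F S] [Algebra.IsSeparable F S] :
    ∃ M : IntermediateField F (SeparableClosure F),
      FiniteDimensional F M ∧ IsGalois F M ∧ Nonempty (S →ₐ[F] M) :=
  ⟨IntermediateField.normalClosure F S (SeparableClosure F), inferInstance, inferInstance,
    ⟨(normalClosure.algHomEquiv ..).symm IsSepClosed.lift⟩⟩

theorem exists_not_dvd_forall_pow_mem_normGroup {F : Type u} {S : Type*} [Field F] [Field S]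
    [Algebra F S] [FiniteDimensional F S] [Algebra.IsSeparable F S] {p : ℕ} (hp : p.Prime)
    (hF : HereditarilyBrauerPTrivial F p) : ∃ m, ¬ p ∣ m ∧ ∀ a : Fˣ, a ^ m ∈ normGroup F S := by
  have := Fact.mk hp
  obtain ⟨M, _, _, ⟨φ⟩⟩ := exists_isGalois_algHom_of_isSeparable F S
  obtain ⟨K, hK, n, hKM⟩ := exists_intermediateField_not_dvd_finrank F M p
  have htop : normGroup K M = ⊤ :=
    normGroup_eq_top_of_finrank_eq_prime_pow hp (hF.extension K) hKM
  exact ⟨finrank F K, hK, fun a ↦ normGroup_le_of_algHom φ <|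
    normGroup_le_of_normGroup_eq_top htop (pow_finrank_mem_normGroup K a)⟩

theorem stmt_18_general {F : Type u} {L : Type*} [Field F] [Field L] [Algebra F L]
    [FiniteDimensional F L] {p : ℕ} (hp : p.Prime) (hF : HereditarilyBrauerPTrivial F p)
    (hL : ¬ p ∣ Field.finInsepDegree F L) : ¬ p ∣ Monoid.exponent (Fˣ ⧸ normGroup F L) := by
  obtain ⟨m, hm, hpow⟩ :=
    exists_not_dvd_forall_pow_mem_normGroup (S := separableClosure F L) hp hF
  have hexp : Monoid.exponent (Fˣ ⧸ normGroup F L) ∣ m * Field.finInsepDegree F L := by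
    refine Monoid.exponent_dvd_of_forall_pow_eq_one fun x ↦ ?_
    induction x using QuotientGroup.induction_on with
    | H a =>
    rw [← QuotientGroup.mk_pow, QuotientGroup.eq_one_iff, pow_mul]
    exact pow_finrank_mem_normGroup_of_mem (hpow a)
  exact fun h ↦ (hp.dvd_mul.1 (h.trans hexp)).elim hm hL

theorem stmt_18 {E : Type u} [Field E] (p : ℕ) (hp : p.Prime)
    (hBr : ∀ (E' : Type u) [Field E'] [Algebra E E'], Algebra.IsAlgebraic E E' →
      BrauerPComponentTrivial E' p) :
    ∀ (E₁ : Type u) [Field E₁] [Algebra E E₁], ∀ (E₂ : Type u) [Field E₂] [Algebra E E₂]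
      [Algebra E₁ E₂] [IsScalarTower E E₁ E₂],
      FiniteDimensional E E₂ → Algebra.IsSeparable E E₂ →
      ¬ p ∣ Monoid.exponent (E₁ˣ ⧸ normGroup E₁ E₂) := by
  intro E₁ _ _ E₂ _ _ _ _ _ _
  have : FiniteDimensional E E₁ := .left E E₁ E₂
  have : FiniteDimensional E₁ E₂ := .right E E₁ E₂
  have : Algebra.IsSeparable E E₁ := Algebra.isSeparable_tower_bot_of_isSeparable E E₁ E₂
  have : Algebra.IsSeparable E₁ E₂ := Algebra.isSeparable_tower_top_of_isSeparable E E₁ E₂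
  have hE : HereditarilyBrauerPTrivial E p := fun E' _ _ _ _ ↦ hBr E' inferInstance
  refine stmt_18_general hp (hE.extension E₁) ?_
  rw [Algebra.IsSeparable.finInsepDegree_eq]
  exact hp.not_dvd_one
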